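/- arXiv:1206.0642 — 2 statements merged into one kernel-verified Lean document; each statement's English description precedes it below -/
import Mathlib

section
/- Let n ≥ 2, let F₀ : Bⁿ → ℂⁿ be locally biholomorphic with F₀(0) = 0 and DF₀(0) = Id, let σ be a biholomorphic automorphism of Bⁿ with σ(0) = ζ, and let G be the Koebe transform of F₀ by σ. Then the gradient of the Jacobian determinant of G at the origin satisfies ∇(JG)(0) = (∇(JF₀)(ζ)/JF₀(ζ))·Dσ(0) + ∇(Jσ)(0)/Jσ(0), where the gradients are row vectors and the first summand is the row vector ∇(JF₀)(ζ)/JF₀(ζ) multiplied on the right by the matrix Dσ(0). -/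
open scoped BigOperators

noncomputable section

/-- Partial derivative `∂f/∂z_i` of a scalar-valued holomorphic function on `ℂⁿ`. -/
def pd (n : ℕ) (i : Fin n) (f : (Fin n → ℂ) → ℂ) (z : Fin n → ℂ) : ℂ :=
  fderiv ℂ f z (Pi.single i 1)

/-- Second partial derivative `∂²f/∂z_i∂z_j`. -/
def pd2 (n : ℕ) (i j : Fin n) (f : (Fin n → ℂ) → ℂ) (z : Fin n → ℂ) : ℂ :=
  pd n i (fun w => pd n j f w) z

/-- Complex Jacobian matrix `DF`. -/
def Jac (n : ℕ) (F : (Fin n → ℂ) → (Fin n → ℂ)) (z : Fin n → ℂ) :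
    Matrix (Fin n) (Fin n) ℂ :=
  Matrix.of fun i j => pd n j (fun w => F w i) z

/-- Jacobian determinant `JF = det DF`. -/
def JDet (n : ℕ) (F : (Fin n → ℂ) → (Fin n → ℂ)) (z : Fin n → ℂ) : ℂ :=
  (Jac n F z).det

/-- Oda's Schwarzian derivative `S^k_{ij}F`; the derivative of `log JF` is expressed
by the logarithmic derivative `(∂JF/∂z)/JF`, which is the derivative of any local
branch of the logarithm. -/
def oSchw (n : ℕ) (F : (Fin n → ℂ) → (Fin n → ℂ)) (i j k : Fin n) (z : Fin n → ℂ) : ℂ :=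
  (∑ l, pd2 n i j (fun w => F w l) z * (Jac n F z)⁻¹ k l)
    - (1 / ((n : ℂ) + 1)) *
        ((if k = i then 1 else 0) * (pd n j (JDet n F) z / JDet n F z)
          + (if k = j then 1 else 0) * (pd n i (JDet n F) z / JDet n F z))

/-- `S⁰_{ij}F`, defined through a local branch `u₀` of `(JF)^{-1/(n+1)}`. -/
def oS0 (n : ℕ) (F : (Fin n → ℂ) → (Fin n → ℂ)) (u₀ : (Fin n → ℂ) → ℂ)
    (i j : Fin n) (z : Fin n → ℂ) : ℂ :=
  (u₀ z)⁻¹ * (pd2 n i j u₀ z - ∑ k, oSchw n F i j k z * pd n k u₀ z)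

/-- Euclidean norm on `ℂⁿ`. -/
def euclNorm (n : ℕ) (v : Fin n → ℂ) : ℝ := Real.sqrt (∑ i, ‖v i‖ ^ 2)

/-- Euclidean open unit ball `Bⁿ ⊆ ℂⁿ`. -/
def eball (n : ℕ) : Set (Fin n → ℂ) := {z | euclNorm n z < 1}

/-- A biholomorphic automorphism of the unit ball: a holomorphic bijection of `Bⁿ`
onto itself with holomorphic inverse. -/
def IsAutB (n : ℕ) (σ : (Fin n → ℂ) → (Fin n → ℂ)) : Prop :=
  DifferentiableOn ℂ σ (eball n) ∧ Set.BijOn σ (eball n) (eball n) ∧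
    ∃ τ : (Fin n → ℂ) → (Fin n → ℂ), DifferentiableOn ℂ τ (eball n) ∧
      (∀ z ∈ eball n, τ (σ z) = z) ∧ (∀ w ∈ eball n, σ (τ w) = w)

/-- The automorphism of `Bⁿ` with `σ(0) = (ζ₁,0,…,0)` used in Lemma 3.2. -/
def sigmaA (n : ℕ) [NeZero n] (ζ : ℂ) (z : Fin n → ℂ) : Fin n → ℂ := fun i =>
  if i = 0 then (z 0 + ζ) / (1 + (starRingEnd ℂ) ζ * z 0)
  else ((Real.sqrt (1 - ‖ζ‖ ^ 2) : ℂ) * z i) / (1 + (starRingEnd ℂ) ζ * z 0)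

/-- The Koebe transform `G(z) = Dσ(0)⁻¹ DF₀(σ(0))⁻¹ (F₀(σ(z)) − F₀(σ(0)))`. -/
def Koebe (n : ℕ) (F₀ σ : (Fin n → ℂ) → (Fin n → ℂ)) (z : Fin n → ℂ) : Fin n → ℂ :=
  Matrix.mulVec ((Jac n σ 0)⁻¹ * (Jac n F₀ (σ 0))⁻¹) (F₀ (σ z) - F₀ (σ 0))

/-- The conjugation `G(z) = U⁻¹·F₀(U·z)` of `F₀` by a unitary matrix `U`. -/
def unitKoebe (n : ℕ) (F₀ : (Fin n → ℂ) → (Fin n → ℂ)) (U : Matrix (Fin n) (Fin n) ℂ)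
    (z : Fin n → ℂ) : Fin n → ℂ :=
  Matrix.mulVec U⁻¹ (F₀ (Matrix.mulVec U z))

/-- The Schwarzian derivative operator `SF(z)(v) = (vᵗ𝕊¹F(z)v, …, vᵗ𝕊ⁿF(z)v)`. -/
def SchwOp (n : ℕ) (F : (Fin n → ℂ) → (Fin n → ℂ)) (z v : Fin n → ℂ) : Fin n → ℂ :=
  fun k => ∑ i, ∑ j, v i * oSchw n F i j k z * v j

/-- The squared Bergman norm `‖v‖_z² = Σ_{i,j} g_{ij}(z) v_i conj(v_j)` on `Bⁿ`. -/
def bergSq (n : ℕ) (z v : Fin n → ℂ) : ℝ :=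
  (∑ i, ∑ j, (((n : ℂ) + 1) / (((1 - (euclNorm n z) ^ 2 : ℝ) : ℂ)) ^ 2) *
      ((if i = j then ((1 - (euclNorm n z) ^ 2 : ℝ) : ℂ) else 0)
        + (starRingEnd ℂ) (z i) * z j) * v i * (starRingEnd ℂ) (v j)).re

/-- Membership in the linearly invariant family `F_α`. -/
def memF (n : ℕ) (α : ℝ) (F : (Fin n → ℂ) → (Fin n → ℂ)) : Prop :=
  DifferentiableOn ℂ F (eball n) ∧ (∀ z ∈ eball n, JDet n F z ≠ 0) ∧
    F 0 = 0 ∧ Jac n F 0 = 1 ∧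
    ∀ z ∈ eball n, ∀ v : Fin n → ℂ, bergSq n z v = 1 →
      Real.sqrt (bergSq n z (SchwOp n F z v)) ≤ α

theorem aux_pd_diff (n : ℕ) (f : (Fin n → ℂ) → ℂ) (U : Set (Fin n → ℂ)) (hU : IsOpen U)
    (hf : DifferentiableOn ℂ f U) (v x : Fin n → ℂ) (hx : x ∈ U) :
    DifferentiableAt ℂ (fun z => fderiv ℂ f z v) x := by
  obtain ⟨R, hR, hRU, hRf⟩ : ∃ R > 0, (∀ y ∈ Metric.ball x R, y ∈ U) ∧
      ∀ y ∈ Metric.ball x R, dist (f y) (f x) ≤ 1 := by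
    have hc : ContinuousAt f x := (hf.differentiableAt (hU.mem_nhds hx)).continuousAt
    have h1 : ∀ᶠ y in nhds x, dist (f y) (f x) ≤ 1 := by
      have := hc.eventually (Metric.ball_mem_nhds (f x) one_pos)
      filter_upwards [this] with y hy using (Metric.mem_ball.1 hy).le
    obtain ⟨R, hR, h⟩ := Metric.eventually_nhds_iff_ball.1 (h1.and (hU.mem_nhds hx))
    exact ⟨R, hR, fun y hy => (h y hy).2, fun y hy => (h y hy).1⟩
  have hdat : ∀ y ∈ Metric.ball x R, DifferentiableAt ℂ f y := fun y hy =>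
    hf.differentiableAt (hU.mem_nhds (hRU y hy))
  have hbd : ∀ y ∈ Metric.ball x (R/2), ‖fderiv ℂ f y‖ ≤ 2 / (R/2) := by
    intro y hy
    have hsub : Metric.ball y (R/2) ⊆ Metric.ball x R := by
      intro w hw
      rw [Metric.mem_ball] at *
      linarith [dist_triangle w y x]
    refine Complex.norm_fderiv_le_div_of_mapsTo_ball
      (fun w hw => (hdat w (hsub hw)).differentiableWithinAt) (fun w hw => ?_) (by positivity)
    rw [Metric.mem_closedBall]
    have h1 := hRf w (hsub hw)
    have h2 := hRf y (hsub (Metric.mem_ball_self (by positivity)))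
    rw [dist_comm] at h2
    linarith [dist_triangle (f w) (f x) (f y)]
  obtain ⟨ρ, hρ, hρv⟩ : ∃ ρ > 0, ρ * ‖v‖ ≤ R / 4 := by
    refine ⟨R / 4 / (‖v‖ + 1), by positivity, ?_⟩
    rw [div_mul_eq_mul_div, div_le_iff₀ (by positivity)]
    nlinarith [norm_nonneg v]
  have hmem : ∀ z ∈ Metric.ball x (R/4), ∀ t : ℂ, ‖t‖ ≤ ρ → z + t • v ∈ Metric.ball x (R/2) := by
    intro z hz t ht
    rw [mem_ball_iff_norm] at *
    have : z + t • v - x = (z - x) + t • v := by abel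
    rw [this]
    have h1 := norm_add_le (z - x) (t • v)
    rw [norm_smul] at h1
    have h2 := mul_le_mul_of_nonneg_right ht (norm_nonneg v)
    linarith
  have hsub2 : ∀ y ∈ Metric.ball x (R/2), y ∈ Metric.ball x R :=
    fun y hy => Metric.ball_subset_ball (by linarith) hy
  have hformula : ∀ z ∈ Metric.ball x (R/4),
      (2 * Real.pi * Complex.I)⁻¹ * (∮ t in C(0, ρ), (1 / (t - 0) ^ 2) • f (z + t • v))
        = fderiv ℂ f z v := by
    intro z hz
    have hd : ∀ t : ℂ, ‖t‖ ≤ ρ →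
        HasDerivAt (fun t : ℂ => f (z + t • v)) (fderiv ℂ f (z + t • v) v) t := by
      intro t ht
      have h1 : HasDerivAt (fun t : ℂ => z + t • v) v t := by
        simpa using ((hasDerivAt_id t).smul_const v).const_add z
      exact (hdat _ (hsub2 _ (hmem z hz t ht))).hasFDerivAt.comp_hasDerivAt t h1
    have h2 : DifferentiableOn ℂ (fun t : ℂ => f (z + t • v)) (Metric.closedBall 0 ρ) := by
      intro t ht
      exact (hd t (by simpa using ht)).differentiableAt.differentiableWithinAt
    rw [h2.deriv_eq_smul_circleIntegral hρ, (hd 0 (by simpa using hρ.le)).deriv]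
    have : (2 * Real.pi * Complex.I : ℂ) ≠ 0 := Complex.two_pi_I_ne_zero
    rw [smul_eq_mul, inv_mul_cancel_left₀ this]
    simp
  have hcm : ∀ θ : ℝ, ‖circleMap 0 ρ θ‖ = ρ := fun θ => by simp [abs_of_pos hρ]
  have hcm0 : ∀ θ : ℝ, circleMap 0 ρ θ ≠ 0 := fun θ h => by
    have := hcm θ; rw [h] at this; simp at this; linarith
  let c : ℝ → ℂ := fun θ => deriv (circleMap 0 ρ) θ * (1 / (circleMap 0 ρ θ - 0) ^ 2)
  have hcc : Continuous c := by
    have : c = fun θ => circleMap 0 ρ θ * Complex.I * (1 / (circleMap 0 ρ θ - 0) ^ 2) := by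
      funext θ; simp [c, deriv_circleMap]
    rw [this]
    refine ((continuous_circleMap 0 ρ).mul continuous_const).mul
      (continuous_const.div (by fun_prop) fun θ => ?_)
    simpa using hcm0 θ
  have hFcont : ∀ z ∈ Metric.ball x (R/4),
      Continuous fun θ : ℝ => c θ • f (z + circleMap 0 ρ θ • v) := by
    intro z hz
    refine hcc.smul (continuous_iff_continuousAt.2 fun θ => ?_)
    have h1 : ContinuousAt f (z + circleMap 0 ρ θ • v) :=
      (hdat _ (hsub2 _ (hmem z hz _ (hcm θ).le))).continuousAt
    exact ContinuousAt.comp (f := fun θ : ℝ => z + circleMap 0 ρ θ • v) h1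
      (by fun_prop)
  have hint : DifferentiableAt ℂ (fun z => ∫ θ in (0:ℝ)..(2 * Real.pi),
      c θ • f (z + circleMap 0 ρ θ • v)) x := by
    refine (intervalIntegral.hasFDerivAt_integral_of_dominated_of_fderiv_le (𝕜 := ℂ)
      (F' := fun z θ => c θ • fderiv ℂ f (z + circleMap 0 ρ θ • v))
      (bound := fun θ => ‖c θ‖ * (2 / (R/2)))
      (Metric.ball_mem_nhds x (show 0 < R/4 by positivity)) ?_ ?_ ?_ ?_ ?_ ?_).differentiableAt
    · filter_upwards [Metric.ball_mem_nhds x (show 0 < R/4 by positivity)] with z hz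
      exact (hFcont z hz).aestronglyMeasurable
    · exact (hFcont x (Metric.mem_ball_self (by positivity))).intervalIntegrable _ _
    · refine (hcc.aestronglyMeasurable).smul ?_
      refine Measurable.aestronglyMeasurable ?_
      exact (measurable_fderiv ℂ f).comp
        (show Continuous fun θ : ℝ => x + circleMap 0 ρ θ • v by fun_prop).measurable
    · refine Filter.Eventually.of_forall fun θ _ z hz => ?_
      rw [norm_smul]
      exact mul_le_mul_of_nonneg_left (hbd _ (hmem z hz _ (hcm θ).le)) (norm_nonneg _)
    · exact (hcc.norm.mul continuous_const).intervalIntegrable _ _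
    · refine Filter.Eventually.of_forall fun θ _ z hz => ?_
      have h1 := (hdat _ (hsub2 _ (hmem z hz _ (hcm θ).le))).hasFDerivAt
      exact ((hasFDerivAt_comp_add_right (circleMap 0 ρ θ • v)).2 h1).const_smul (c θ)
  refine (hint.const_mul (2 * Real.pi * Complex.I)⁻¹).congr_of_eventuallyEq ?_
  filter_upwards [Metric.ball_mem_nhds x (show 0 < R/4 by positivity)] with z hz
  rw [← hformula z hz]
  simp only [circleIntegral, c, smul_eq_mul, mul_assoc]

theorem aux_open (n : ℕ) : IsOpen (eball n) := by
  unfold eball euclNorm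
  exact isOpen_lt (by fun_prop) continuous_const

theorem aux_Jac (n : ℕ) (F : (Fin n → ℂ) → (Fin n → ℂ)) (z : Fin n → ℂ)
    (h : DifferentiableAt ℂ F z) :
    Jac n F z = LinearMap.toMatrix' (fderiv ℂ F z : (Fin n → ℂ) →ₗ[ℂ] (Fin n → ℂ)) := by
  ext i j
  have h1 := (hasFDerivAt_pi'.1 h.hasFDerivAt i).fderiv
  simp only [Jac, pd, Matrix.of_apply, LinearMap.toMatrix'_apply]
  rw [h1]
  simp

theorem aux_Jac_comp (n : ℕ) (F G : (Fin n → ℂ) → (Fin n → ℂ)) (z : Fin n → ℂ)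
    (hF : DifferentiableAt ℂ F (G z)) (hG : DifferentiableAt ℂ G z) :
    Jac n (fun w => F (G w)) z = Jac n F (G z) * Jac n G z := by
  have h := hF.hasFDerivAt.comp z hG.hasFDerivAt
  have h2 : DifferentiableAt ℂ (fun w => F (G w)) z := h.differentiableAt
  rw [aux_Jac n _ z h2, aux_Jac n _ _ hF, aux_Jac n _ _ hG, ← LinearMap.toMatrix'_comp]
  have h3 : fderiv ℂ (fun w => F (G w)) z = _ := h.fderiv
  rw [h3]
  rfl

theorem aux_JDet_diff (n : ℕ) (F : (Fin n → ℂ) → (Fin n → ℂ))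
    (hF : DifferentiableOn ℂ F (eball n)) (x : Fin n → ℂ) (hx : x ∈ eball n) :
    DifferentiableAt ℂ (JDet n F) x := by
  have h : ∀ i j, DifferentiableAt ℂ (fun z => Jac n F z i j) x := fun i j =>
    aux_pd_diff n (fun w => F w i) (eball n) (aux_open n)
      (fun w hw => (differentiableWithinAt_pi.1 (hF w hw) i)) _ x hx
  unfold JDet
  simp only [Matrix.det_apply]
  refine DifferentiableAt.fun_sum fun s _ => ?_
  refine DifferentiableAt.const_smul ?_ _
  exact (HasFDerivAt.finsetProd fun i _ => (h (s i) i).hasFDerivAt).differentiableAt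

theorem aux_Jac_affine (n : ℕ) (A : Matrix (Fin n) (Fin n) ℂ) (b y : Fin n → ℂ) :
    DifferentiableAt ℂ (fun w => Matrix.mulVec A (w - b)) y ∧
    Jac n (fun w => Matrix.mulVec A (w - b)) y = A := by
  have h : HasFDerivAt (fun w => Matrix.mulVec A (w - b))
      (LinearMap.toContinuousLinearMap (Matrix.toLin' A)) y := by
    have := (LinearMap.toContinuousLinearMap (Matrix.toLin' A)).hasFDerivAt (x := y - b)
    exact (hasFDerivAt_comp_sub b).2 this
  refine ⟨h.differentiableAt, ?_⟩
  rw [aux_Jac n _ _ h.differentiableAt, h.fderiv]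
  simp

/-- for the Koebe transform `G` of `F₀` by `σ`,
`∇(JG)(0) = (∇(JF₀)(ζ)/JF₀(ζ))·Dσ(0) + ∇(Jσ)(0)/Jσ(0)` (row vectors). -/
theorem stmt_6 (n : ℕ) (hn : 2 ≤ n) (F₀ : (Fin n → ℂ) → (Fin n → ℂ))
    (hF₀hol : DifferentiableOn ℂ F₀ (eball n))
    (hF₀J : ∀ z ∈ eball n, JDet n F₀ z ≠ 0)
    (hF₀0 : F₀ 0 = 0) (hF₀D : Jac n F₀ 0 = 1)
    (σ : (Fin n → ℂ) → (Fin n → ℂ)) (hσ : IsAutB n σ)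
    (ζ : Fin n → ℂ) (hζ : ζ = σ 0) :
    ∀ i : Fin n, pd n i (JDet n (Koebe n F₀ σ)) 0 =
      (∑ j, (pd n j (JDet n F₀) ζ / JDet n F₀ ζ) * Jac n σ 0 j i)
        + pd n i (JDet n σ) 0 / JDet n σ 0 := by
  intro i
  subst hζ
  obtain ⟨hσd, hσb, τ, hτd, hτσ, -⟩ := hσ
  have hO := aux_open n
  have h0 : (0 : Fin n → ℂ) ∈ eball n := by simp [eball, euclNorm]
  have hσm : ∀ z ∈ eball n, σ z ∈ eball n := fun z hz => hσb.mapsTo hz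
  have hσat : ∀ z ∈ eball n, DifferentiableAt ℂ σ z := fun z hz =>
    hσd.differentiableAt (hO.mem_nhds hz)
  have hFat : ∀ z ∈ eball n, DifferentiableAt ℂ F₀ z := fun z hz =>
    hF₀hol.differentiableAt (hO.mem_nhds hz)
  have hJσ : JDet n σ 0 ≠ 0 := by
    have h1 := aux_Jac_comp n τ σ 0 (hτd.differentiableAt (hO.mem_nhds (hσm 0 h0))) (hσat 0 h0)
    have h2 : Jac n (fun w => τ (σ w)) 0 = 1 := by
      have h3 : (fun w => τ (σ w)) =ᶠ[nhds 0] id := by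
        filter_upwards [hO.mem_nhds h0] with w hw using hτσ w hw
      rw [aux_Jac n _ _ (differentiableAt_id.congr_of_eventuallyEq h3), h3.fderiv_eq]
      simp
    rw [h2] at h1
    have h4 := congrArg Matrix.det h1
    rw [Matrix.det_one, Matrix.det_mul] at h4
    exact right_ne_zero_of_mul (h4 ▸ one_ne_zero)
  have hJF := hF₀J _ (hσm 0 h0)
  have hK : JDet n (Koebe n F₀ σ) =ᶠ[nhds 0]
      fun z => ((JDet n σ 0)⁻¹ * (JDet n F₀ (σ 0))⁻¹) * (JDet n F₀ (σ z) * JDet n σ z) := by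
    filter_upwards [hO.mem_nhds h0] with z hz
    have hFσ : DifferentiableAt ℂ (fun w => F₀ (σ w)) z :=
      (hFat _ (hσm z hz)).comp z (hσat z hz)
    obtain ⟨hA, hA'⟩ := aux_Jac_affine n ((Jac n σ 0)⁻¹ * (Jac n F₀ (σ 0))⁻¹) (F₀ (σ 0))
      (F₀ (σ z))
    have h1 := aux_Jac_comp n _ (fun w => F₀ (σ w)) z hA hFσ
    rw [hA', aux_Jac_comp n F₀ σ z (hFat _ (hσm z hz)) (hσat z hz)] at h1
    have h2 := congrArg Matrix.det h1
    rw [Matrix.det_mul, Matrix.det_mul, Matrix.det_mul, Matrix.det_nonsing_inv,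
      Matrix.det_nonsing_inv, Ring.inverse_eq_inv, Ring.inverse_eq_inv] at h2
    exact h2
  have hFD := aux_JDet_diff n F₀ hF₀hol _ (hσm 0 h0)
  have hσD := aux_JDet_diff n σ hσd _ h0
  have hcomp : HasFDerivAt (fun z => JDet n F₀ (σ z)) _ 0 :=
    hFD.hasFDerivAt.comp 0 (hσat 0 h0).hasFDerivAt
  have hder := (hcomp.mul hσD.hasFDerivAt).const_mul
    ((JDet n σ 0)⁻¹ * (JDet n F₀ (σ 0))⁻¹)
  have hchain : fderiv ℂ (JDet n F₀) (σ 0) (fderiv ℂ σ 0 (Pi.single i 1)) =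
      ∑ j, pd n j (JDet n F₀) (σ 0) * Jac n σ 0 j i := by
    rw [aux_Jac n σ 0 (hσat 0 h0)]
    conv_lhs => rw [pi_eq_sum_univ' (fderiv ℂ σ 0 (Pi.single i 1))]
    rw [map_sum]
    refine Finset.sum_congr rfl fun j _ => ?_
    rw [map_smul, smul_eq_mul, mul_comm]
    simp only [pd, LinearMap.toMatrix'_apply, ContinuousLinearMap.coe_coe]
  have hL : pd n i (JDet n (Koebe n F₀ σ)) 0 = ((JDet n σ 0)⁻¹ * (JDet n F₀ (σ 0))⁻¹) *
      (JDet n F₀ (σ 0) * pd n i (JDet n σ) 0 + JDet n σ 0 *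
        ∑ j, pd n j (JDet n F₀) (σ 0) * Jac n σ 0 j i) := by
    rw [← hchain, pd, hK.fderiv_eq]
    have h5 := hder.fderiv
    have h6 : fderiv ℂ (fun z => ((JDet n σ 0)⁻¹ * (JDet n F₀ (σ 0))⁻¹) *
      (JDet n F₀ (σ z) * JDet n σ z)) 0 = _ := h5
    rw [h6]
    simp [pd]
    ring
  rw [hL]
  simp only [div_mul_eq_mul_div]
  rw [← Finset.sum_div]
  field_simp
  ring

end
end

section
/- (Lemma 3.1) Let n ≥ 2 and let F₀ : Bⁿ → ℂⁿ be locally biholomorphic with F₀(0) = 0 and DF₀(0) = Id (so JF₀(0) = 1). Write Λ = ∇(JF₀)(0) = (λ₁,…,λₙ), B_{ij} = Σ_{k=1}^n S^k_{ij}F₀(0)·λ_k, B⁰_{ij} = S⁰_{ij}F₀(0), and A_{ij} = B_{ij} − (n+1)B⁰_{ij} + λ_iλ_j/(n+1). Then the holomorphic map φ(ζ) = ∇(JF₀)(ζ)/JF₀(ζ) satisfies φ(0) = Λ and Dφ(0) = A; equivalently, φ(ζ) = Λ + A·ζ + O(|ζ|²) as ζ → 0, and ∂²(log JF₀)/∂z_j∂z_i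 (0) = A_{ij} for all i,j. -/
open scoped BigOperators

noncomputable section

section Helpers
open Metric Set MeasureTheory Filter Topology

theorem dirDeriv_differentiableAt {n : ℕ} {u : (Fin n → ℂ) → ℂ} {U : Set (Fin n → ℂ)}
    (hU : U ∈ 𝓝 (0 : Fin n → ℂ)) (hu : DifferentiableOn ℂ u U) (e : Fin n → ℂ) (he : ‖e‖ ≤ 1) :
    DifferentiableAt ℂ (fun w => fderiv ℂ u w e) 0 := by
  have hc : ContinuousAt u 0 := (hu.differentiableAt hU).continuousAt
  have h1 : ∀ᶠ w in 𝓝 (0 : Fin n → ℂ), dist (u w) (u 0) < 1 := (Metric.tendsto_nhds.1 hc) 1 one_pos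
  obtain ⟨R, hR, hRU⟩ := Metric.mem_nhds_iff.1 (inter_mem hU h1)
  obtain ⟨s, hs, hsR⟩ : ∃ s : ℝ, 0 < s ∧ R = 3 * s := ⟨R / 3, by positivity, by ring⟩
  subst hsR
  have hd : ∀ w ∈ ball (0 : Fin n → ℂ) (3 * s), DifferentiableAt ℂ u w := fun w hw =>
    (hu.mono (fun z hz => (hRU hz).1)).differentiableAt (isOpen_ball.mem_nhds hw)
  have hb : ∀ w ∈ ball (0 : Fin n → ℂ) (2 * s), ‖fderiv ℂ u w‖ ≤ 2 / s := by
    intro w hw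
    rw [mem_ball_zero_iff] at hw
    have hsub : ∀ z ∈ ball w s, z ∈ ball (0 : Fin n → ℂ) (3 * s) := by
      intro z hz
      rw [mem_ball_zero_iff]
      rw [mem_ball_iff_norm] at hz
      have := norm_add_le (z - w) w
      rw [sub_add_cancel] at this
      linarith
    apply Complex.norm_fderiv_le_div_of_mapsTo_ball (R₁ := s) (R₂ := 2) _ _ hs
    · exact fun z hz => (hd z (hsub z hz)).differentiableWithinAt
    · intro z hz
      have a := (hRU (hsub z hz)).2
      have b := (hRU (hsub w (mem_ball_self hs))).2
      simp only [mem_ofPred_eq] at a b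
      rw [mem_closedBall]
      have := dist_triangle_right (u z) (u w) (u 0)
      linarith
  have hmem : ∀ w ∈ ball (0 : Fin n → ℂ) s, ∀ t : ℂ, ‖t‖ ≤ s →
      w + t • e ∈ ball (0 : Fin n → ℂ) (2 * s) := by
    intro w hw t ht
    rw [mem_ball_zero_iff] at *
    have h1 := norm_add_le w (t • e)
    rw [norm_smul] at h1
    have : ‖t‖ * ‖e‖ ≤ s * 1 := by gcongr
    linarith
  have hmem3 : ∀ w ∈ ball (0 : Fin n → ℂ) (2 * s), w ∈ ball (0 : Fin n → ℂ) (3 * s) :=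
    fun w hw => ball_subset_ball (by linarith) hw
  have hline : ∀ w ∈ ball (0 : Fin n → ℂ) s, ∀ t : ℂ, ‖t‖ ≤ s →
      HasDerivAt (fun t : ℂ => u (w + t • e)) (fderiv ℂ u (w + t • e) e) t := by
    intro w hw t ht
    have h1 := (hd _ (hmem3 _ (hmem w hw t ht))).hasFDerivAt
    have h2 : HasDerivAt (fun t : ℂ => w + t • e) e t := by
      simpa using ((hasDerivAt_id t).smul_const e).const_add w
    exact h1.comp_hasDerivAt t h2
  set c : ℝ → ℂ := circleMap 0 s with hcdef
  have hcn : ∀ θ, ‖c θ‖ ≤ s := fun θ => by simp [hcdef, abs_of_pos hs]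
  have hcc : Continuous c := continuous_circleMap 0 s
  set k : ℝ → ℂ := fun θ => (2 * Real.pi * Complex.I)⁻¹ * (deriv c θ * (c θ ^ 2)⁻¹) with hk
  have hc0 : ∀ θ, c θ ≠ 0 := fun θ => circleMap_ne_center hs.ne'
  have hkc : Continuous k := by
    have : deriv c = fun θ => c θ * Complex.I := by
      ext θ; simp [hcdef]
    rw [hk, this]
    exact continuous_const.mul ((hcc.mul continuous_const).mul
      ((hcc.pow 2).inv₀ fun θ => pow_ne_zero 2 (hc0 θ)))
  have hrep : ∀ w ∈ ball (0 : Fin n → ℂ) s,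
      fderiv ℂ u w e = ∫ θ in Ioc 0 (2 * Real.pi), k θ * u (w + c θ • e) := by
    intro w hw
    have h1 : deriv (fun t : ℂ => u (w + t • e)) 0 = fderiv ℂ u w e := by
      simpa using (hline w hw 0 (by simpa using hs.le)).deriv
    have h2 : DiffContOnCl ℂ (fun t : ℂ => u (w + t • e)) (ball 0 s) := by
      apply DifferentiableOn.diffContOnCl
      intro t ht
      have := closure_ball_subset_closedBall ht
      rw [mem_closedBall_zero_iff] at this
      exact (hline w hw t this).differentiableAt.differentiableWithinAt
    have h3 := h2.deriv_eq_smul_circleIntegral hs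
    have h4 : (2 * Real.pi * Complex.I : ℂ) ≠ 0 := Complex.two_pi_I_ne_zero
    rw [circleIntegral, intervalIntegral.integral_of_le (by positivity), smul_eq_mul, h1] at h3
    rw [← mul_right_inj' h4, ← h3, ← integral_const_mul]
    congr 1
    ext θ
    simp only [hk, smul_eq_mul, sub_zero, hcdef]
    field_simp
  have hcont : ∀ w ∈ ball (0 : Fin n → ℂ) s, Continuous fun θ => k θ * u (w + c θ • e) := by
    intro w hw
    refine hkc.mul (continuous_iff_continuousAt.2 fun θ => ?_)
    exact ContinuousAt.comp (f := fun θ => w + c θ • e) (hd _ (hmem3 _ (hmem w hw _ (hcn θ)))).continuousAt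
      (by fun_prop)
  have h0 : (0 : Fin n → ℂ) ∈ ball (0 : Fin n → ℂ) s := mem_ball_self hs
  have key := hasFDerivAt_integral_of_dominated_of_fderiv_le (𝕜 := ℂ)
    (μ := volume.restrict (Ioc 0 (2 * Real.pi))) (x₀ := (0 : Fin n → ℂ))
    (s := ball (0 : Fin n → ℂ) s)
    (F := fun w θ => k θ * u (w + c θ • e))
    (F' := fun w θ => k θ • fderiv ℂ u (w + c θ • e))
    (bound := fun θ => ‖k θ‖ * (2 / s)) (ball_mem_nhds _ hs)
    (by filter_upwards [ball_mem_nhds _ hs] with w hw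
        exact (hcont w hw).aestronglyMeasurable)
    (((hcont 0 h0).integrableOn_Icc (a := 0) (b := 2 * Real.pi)).mono_set Ioc_subset_Icc_self)
    (by
      apply AEStronglyMeasurable.smul hkc.aestronglyMeasurable
      borelize ((Fin n → ℂ) →L[ℂ] ℂ)
      have := FiniteDimensional.proper ℂ ((Fin n → ℂ) →L[ℂ] ℂ)
      exact ((measurable_fderiv ℂ u).comp
        (by fun_prop : Continuous fun θ => (0 : Fin n → ℂ) + c θ • e).measurable).aestronglyMeasurable)
    (by
      refine Eventually.of_forall fun θ w hw => ?_
      rw [norm_smul]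
      gcongr
      exact hb _ (hmem w hw _ (hcn θ)))
    (((by fun_prop : Continuous fun θ => ‖k θ‖ * (2 / s)).integrableOn_Icc
      (a := 0) (b := 2 * Real.pi)).mono_set Ioc_subset_Icc_self)
    (by
      refine Eventually.of_forall fun θ w hw => ?_
      have h1 := (hd _ (hmem3 _ (hmem w hw _ (hcn θ)))).hasFDerivAt
      have h2 : HasFDerivAt (fun w => w + c θ • e) (ContinuousLinearMap.id ℂ (Fin n → ℂ)) w :=
        (hasFDerivAt_id w).add_const _
      exact (h1.comp w h2).const_mul (k θ))
  refine (key.congr_of_eventuallyEq ?_).differentiableAt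
  filter_upwards [ball_mem_nhds _ hs] with w hw using hrep w hw

theorem fderiv_differentiableAt_zero {n : ℕ} {u : (Fin n → ℂ) → ℂ} {U : Set (Fin n → ℂ)}
    (hU : U ∈ 𝓝 (0 : Fin n → ℂ)) (hu : DifferentiableOn ℂ u U) :
    DifferentiableAt ℂ (fderiv ℂ u) 0 := by
  have h : fderiv ℂ u = fun w => ∑ i, fderiv ℂ u w (Pi.single i 1) •
      (ContinuousLinearMap.proj i : (Fin n → ℂ) →L[ℂ] ℂ) := by
    ext w v
    conv_lhs => rw [pi_eq_sum_univ' v]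
    simp [map_sum, mul_comm]
  rw [h]
  apply DifferentiableAt.fun_sum
  intro i _
  exact (dirDeriv_differentiableAt hU hu _ (by rw [Pi.norm_single]; simp)).smul_const _

end Helpers

/-- Lemma 3.1: for normalized locally biholomorphic `F₀` with
`Λ = ∇(JF₀)(0)`, `B_{ij} = Σ_k S^k_{ij}F₀(0)λ_k`, `B⁰_{ij} = S⁰_{ij}F₀(0)` and
`A_{ij} = B_{ij} − (n+1)B⁰_{ij} + λ_iλ_j/(n+1)`, the map `φ(ζ) = ∇(JF₀)(ζ)/JF₀(ζ)`
satisfies `φ(0) = Λ` and `Dφ(0) = A`, i.e. `∂²(log JF₀)/∂z_j∂z_i(0) = A_{ij}`. -/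
theorem stmt_8 (n : ℕ) (hn : 2 ≤ n) (F₀ : (Fin n → ℂ) → (Fin n → ℂ))
    (hF₀hol : DifferentiableOn ℂ F₀ (eball n))
    (hF₀J : ∀ z ∈ eball n, JDet n F₀ z ≠ 0)
    (hF₀0 : F₀ 0 = 0) (hF₀D : Jac n F₀ 0 = 1)
    -- `u₀` is a local branch of `(JF₀)^{-1/(n+1)}` with `u₀(0) = 1`
    (u₀ : (Fin n → ℂ) → ℂ) (r : ℝ) (hr : 0 < r) (hr1 : r ≤ 1)
    (hu₀hol : DifferentiableOn ℂ u₀ {z | euclNorm n z < r}) (hu₀0 : u₀ 0 = 1)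
    (hu₀pow : ∀ z, euclNorm n z < r → u₀ z ^ (n + 1) * JDet n F₀ z = 1)
    (Λ : Fin n → ℂ) (hΛ : ∀ k, Λ k = pd n k (JDet n F₀) 0)
    (A : Fin n → Fin n → ℂ)
    (hA : ∀ i j, A i j = (∑ k, oSchw n F₀ i j k 0 * Λ k)
      - ((n : ℂ) + 1) * oS0 n F₀ u₀ i j 0 + Λ i * Λ j / ((n : ℂ) + 1)) :
    (∀ i, pd n i (JDet n F₀) 0 / JDet n F₀ 0 = Λ i) ∧
    (∀ i j, pd n j (fun w => pd n i (JDet n F₀) w / JDet n F₀ w) 0 = A i j) := by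
  have hcont : Continuous (euclNorm n) := by
    unfold euclNorm
    fun_prop
  have hUo : IsOpen {z : Fin n → ℂ | euclNorm n z < r} := isOpen_lt hcont continuous_const
  have h0U : (0 : Fin n → ℂ) ∈ {z : Fin n → ℂ | euclNorm n z < r} := by
    simpa [euclNorm] using hr
  have hU := hUo.mem_nhds h0U
  have hJ0 : JDet n F₀ 0 = 1 := by simp [JDet, hF₀D]
  have hne : ∀ z, euclNorm n z < r → u₀ z ≠ 0 := by
    intro z hz h
    have := hu₀pow z hz
    simp [h] at this
  have hN : ((n : ℂ) + 1) ≠ 0 := by exact_mod_cast Nat.succ_ne_zero n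
  have hdu : ∀ z, euclNorm n z < r → DifferentiableAt ℂ u₀ z := fun z hz =>
    hu₀hol.differentiableAt (hUo.mem_nhds hz)
  have hJeq : ∀ z, euclNorm n z < r → JDet n F₀ z = (u₀ z ^ (n + 1))⁻¹ := fun z hz =>
    eq_inv_of_mul_eq_one_right (hu₀pow z hz)
  have hpd : ∀ i z, euclNorm n z < r →
      pd n i (JDet n F₀) z / JDet n F₀ z = -((n : ℂ) + 1) * (pd n i u₀ z / u₀ z) := by
    intro i z hz
    have hev : JDet n F₀ =ᶠ[nhds z] fun z => (u₀ z ^ (n + 1))⁻¹ := by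
      filter_upwards [hUo.mem_nhds hz] with w hw using hJeq w hw
    have hd1 : HasDerivAt (fun t : ℂ => (t ^ (n + 1))⁻¹)
        (-(((n + 1 : ℕ) : ℂ) * u₀ z ^ n) / (u₀ z ^ (n + 1)) ^ 2) (u₀ z) :=
      (hasDerivAt_pow (n + 1) (u₀ z)).inv (pow_ne_zero _ (hne z hz))
    have hd2 := hd1.comp_hasFDerivAt z (hdu z hz).hasFDerivAt
    have hd3 : fderiv ℂ (JDet n F₀) z = _ := hev.fderiv_eq.trans hd2.fderiv
    unfold pd
    rw [hd3, hJeq z hz]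
    have := hne z hz
    simp only [smul_apply, smul_eq_mul]
    push_cast
    field_simp
    ring
  have hΛu : ∀ k, Λ k = -((n : ℂ) + 1) * pd n k u₀ 0 := by
    intro k
    have := hpd k 0 h0U
    rw [hJ0, hu₀0, div_one, div_one] at this
    rw [hΛ, this]
  refine ⟨fun i => by rw [hJ0, div_one, hΛ], fun i j => ?_⟩
  have hD := fderiv_differentiableAt_zero hU hu₀hol
  have hpdd : ∀ k, HasFDerivAt (fun w => pd n k u₀ w)
      ((fderiv ℂ (fderiv ℂ u₀) 0).flip (Pi.single k 1)) 0 := by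
    intro k
    have := hD.hasFDerivAt.clm_apply (hasFDerivAt_const (Pi.single k (1 : ℂ)) (0 : Fin n → ℂ))
    simpa [pd] using this
  have hsymm : pd2 n i j u₀ 0 = pd2 n j i u₀ 0 := by
    unfold pd2
    rw [pd, (hpdd j).fderiv, pd, (hpdd i).fderiv]
    simp only [ContinuousLinearMap.flip_apply]
    refine second_derivative_symmetric_of_eventually (f := u₀) ?_ hD.hasFDerivAt _ _
    filter_upwards [hU] with w hw using (hdu w hw).hasFDerivAt
  have hev : (fun w => pd n i (JDet n F₀) w / JDet n F₀ w) =ᶠ[nhds 0]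
      fun w => -((n : ℂ) + 1) * (pd n i u₀ w / u₀ w) := by
    filter_upwards [hU] with w hw using hpd i w hw
  have hq := ((hpdd i).differentiableAt.hasFDerivAt.mul
    ((hasDerivAt_inv (hne 0 h0U)).comp_hasFDerivAt 0 (hdu 0 h0U).hasFDerivAt)).const_mul (-((n : ℂ) + 1))
  have hLHS : pd n j (fun w => pd n i (JDet n F₀) w / JDet n F₀ w) 0 =
      -((n : ℂ) + 1) * (pd2 n i j u₀ 0 - pd n i u₀ 0 * pd n j u₀ 0) := by
    rw [hsymm]
    conv_lhs => rw [pd, hev.fderiv_eq]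
    simp only [div_eq_mul_inv]
    erw [hq.fderiv]
    simp [pd, pd2, hu₀0]
    ring
  rw [hLHS, hA, oS0, hu₀0]
  have hs : ∑ k, oSchw n F₀ i j k 0 * Λ k =
      -((n : ℂ) + 1) * ∑ k, oSchw n F₀ i j k 0 * pd n k u₀ 0 := by
    rw [Finset.mul_sum]
    refine Finset.sum_congr rfl fun k _ => ?_
    rw [hΛu]
    ring
  rw [hs, hΛu i, hΛu j]
  field_simp
  ring

end
end
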